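/- In the Gaussian sequence model, for every q ≥ 1 there exists a constant C_q > 0 depending only on q such that for all σ > 0, a > 0 and integers s, p with 1 ≤ s ≤ p/4, the hard-thresholding estimator β̂^a defined by β̂^a_j(Y) = Y_j·1{|Y_j| ≥ t(max(a, t*))} satisfies: sup_{β ∈ Ω^p_{s,a}} E_β‖β̂^a(Y) − β‖_q^q ≤ C_q Φ_+(a). -/

import Mathlib

/-!
The risk splits into coordinate risks, with threshold `τ = t(M)`, `M = max a t*`; by the AM–GM
inequality `t* ≤ τ ≤ M`, and `τ ≥ σ` because `log (p / s - 1) ≥ 1`.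

A null coordinate contributes `E |σε|^q 1{|σε| ≥ τ}`, which is at most a constant times
`τ^q P(σε > τ)` (`risk_null`). The reason is that, for `T = τ / σ ≥ 1`, the law of `ε / T`
conditioned on `ε > T` decreases stochastically in `T`, so its `q`-th moment is at most the one at
`T = 1` (`scaled_trunc_le`).

A signal coordinate `b` has error `|Y - b|` when kept and `|b| ≤ |Y - b| + M` when discarded, so it
contributes at most `2^q (σ_q^q + M^q P(|Y| < τ))` (`risk_signal`), and
`P(|Y| < τ) ≤ P(σε > a - τ)` (`gauss_abs_lt_le`).

If `a ≥ t*`, then `M = a`, and summing gives the two terms of `ψ₊` times `a^q`, plus `s σ_q^q`. There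
may be up to `p` null coordinates, but `p ≤ 2 (p - s)`. If `a < t*`, then `M = τ = t*` and
Chernoff's bound gives `P(σε > t*) ≤ s / (p - s)`, so the null coordinates contribute `O(s t*^q)`,
as do the signals.
-/

open MeasureTheory ProbabilityTheory Filter
open scoped ENNReal NNReal BigOperators Classical

noncomputable section

/-- The Gaussian distribution `N(m, σ²)` on `ℝ`. -/
def gauss (m σ : ℝ) : Measure ℝ := gaussianReal m ⟨σ ^ 2, sq_nonneg σ⟩

/-- The standard Gaussian distribution on `ℝ`. -/
def stdG : Measure ℝ := gaussianReal 0 1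

/-- The Gaussian sequence model: `Y` has independent coordinates `Y j ~ N(β j, σ²)`. -/
def seqModel (p : ℕ) (σ : ℝ) (β : Fin p → ℝ) : Measure (Fin p → ℝ) :=
  Measure.pi fun j => gauss (β j) σ

/-- `Ω^p_{s,a}`: `s`-sparse vectors with nonzero coordinates at least `a` in absolute value. -/
def sparseSet (p s : ℕ) (a : ℝ) : Set (Fin p → ℝ) :=
  {β | (Finset.univ.filter fun i => β i ≠ 0).card ≤ s ∧ ∀ i, β i ≠ 0 → a ≤ |β i|}

/-- The risk `E_β ‖est(Y) − β‖_q^q` in the Gaussian sequence model. -/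
def seqRisk (p : ℕ) (σ q : ℝ) (est : (Fin p → ℝ) → Fin p → ℝ) (β : Fin p → ℝ) : ℝ≥0∞ :=
  ∫⁻ y, ENNReal.ofReal (∑ j, |est y j - β j| ^ q) ∂(seqModel p σ β)

/-- The maximal risk over `Ω^p_{s,a}`. -/
def maxRisk (p s : ℕ) (σ q a : ℝ) (est : (Fin p → ℝ) → Fin p → ℝ) : ℝ≥0∞ :=
  ⨆ β ∈ sparseSet p s a, seqRisk p σ q est β

/-- The minimax risk over `Ω^p_{s,a}` in the Gaussian sequence model. -/
def minimax (p s : ℕ) (σ q a : ℝ) : ℝ≥0∞ :=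
  ⨅ (est : (Fin p → ℝ) → Fin p → ℝ) (_ : Measurable est), maxRisk p s σ q a est

/-- `σ_q^q = E|η|^q` where `η ~ N(0, σ²)`. -/
def sigmaqq (σ q : ℝ) : ℝ := ∫ x, |x| ^ q ∂(gauss 0 σ)

/-- `P(σ ε > t)` for a standard Gaussian `ε`. -/
def PgtS (σ t : ℝ) : ℝ := (stdG {x | t < σ * x}).toReal

/-- `P(σ ε ≥ t)` for a standard Gaussian `ε`. -/
def PgeS (σ t : ℝ) : ℝ := (stdG {x | t ≤ σ * x}).toReal

/-- The threshold `t(a) = a/2 + σ² log(p/s − 1)/a`. -/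
def tFun (p s : ℕ) (σ a : ℝ) : ℝ := a / 2 + σ ^ 2 * Real.log ((p : ℝ) / s - 1) / a

/-- `t* = σ √(2 log(p/s − 1))`. -/
def tStar (p s : ℕ) (σ : ℝ) : ℝ := σ * Real.sqrt (2 * Real.log ((p : ℝ) / s - 1))

/-- `ψ(p,s,a,σ) = (p−s) P(σε > t(a)) + s P(σε > a − t(a))`. -/
def psi (p s : ℕ) (σ a : ℝ) : ℝ :=
  ((p : ℝ) - s) * PgtS σ (tFun p s σ a) + s * PgtS σ (a - tFun p s σ a)

/-- `ψ₊(p,s,a,σ) = (p−s) P(σε > t(a)) + s P(σε > (a − t(a))₊)`. -/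
def psiPlus (p s : ℕ) (σ a : ℝ) : ℝ :=
  ((p : ℝ) - s) * PgtS σ (tFun p s σ a) + s * PgtS σ (max (a - tFun p s σ a) 0)

/-- The hard-thresholding estimator at level `τ`. -/
def hardThr (p : ℕ) (τ : ℝ) : (Fin p → ℝ) → Fin p → ℝ :=
  fun y j => if τ ≤ |y j| then y j else 0

/-- The rate `Φ₊(a)` from the paper. -/
def PhiPlus (p s : ℕ) (σ q a : ℝ) : ℝ :=
  if tStar p s σ ≤ a then max (a ^ q * psiPlus p s σ a) (sigmaqq σ q * s)
  else s * σ ^ q * (2 * Real.log ((p : ℝ) / s - 1)) ^ (q / 2)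

/-! ### Truncated Gaussian moments -/

/-- The mean of `x ^ q` under the Gaussian law conditioned on `(1, ∞)`. -/
def truncMoment (q : ℝ) : ℝ :=
  (∫ x in Set.Ioi (1 : ℝ), x ^ q * Real.exp (-(1 / 2) * x ^ 2)) /
    ∫ x in Set.Ioi (1 : ℝ), Real.exp (-(1 / 2) * x ^ 2)

lemma integral_exp_Ioi_pos (T : ℝ) :
    0 < ∫ x in Set.Ioi T, Real.exp (-(1 / 2) * x ^ 2) := by
  rw [setIntegral_pos_iff_support_of_nonneg_ae]
  · have : Function.support (fun x : ℝ => Real.exp (-(1 / 2) * x ^ 2)) = Set.univ := by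
      ext x; simp [Real.exp_ne_zero]
    rw [this]; simp
  · exact ae_of_all _ fun x => (Real.exp_pos _).le
  · exact (integrable_exp_neg_mul_sq (by norm_num)).integrableOn

lemma truncMoment_nonneg (q : ℝ) : 0 ≤ truncMoment q := by
  unfold truncMoment
  refine div_nonneg (setIntegral_nonneg measurableSet_Ioi fun x hx => ?_)
    (integral_exp_Ioi_pos 1).le
  have : (0 : ℝ) < x := lt_trans one_pos hx
  positivity

/-- Under the density proportional to `exp (-T² r² / 2)` on `(1, ∞)`, the mean of `r ^ q` is at
most its value at `T = 1`: raising `T` multiplies the density by a decreasing function, which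
favours small `r`. -/
lemma scaled_trunc_le {q T : ℝ} (hq : 1 ≤ q) (hT : 1 ≤ T) :
    ∫ r in Set.Ioi (1 : ℝ), r ^ q * Real.exp (-(1 / 2) * (T * r) ^ 2) ≤
      truncMoment q * ∫ r in Set.Ioi (1 : ℝ), Real.exp (-(1 / 2) * (T * r) ^ 2) := by
  set m := truncMoment q with hm
  have hm0 : 0 ≤ m := truncMoment_nonneg q
  have hq0 : 0 < q := by linarith
  -- the crossing point of `r ^ q` and its mean `m`
  set r₀ := m ^ q⁻¹ with hr₀
  have hr₀q : r₀ ^ q = m := by rw [hr₀, Real.rpow_inv_rpow hm0 hq0.ne']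
  have hr₀0 : 0 ≤ r₀ := by positivity
  have hexp : ∀ r : ℝ, Real.exp (-(1 / 2) * (T * r) ^ 2) = Real.exp (-(T ^ 2 / 2) * r ^ 2) := by
    intro r; congr 1; ring
  have hT2 : 0 < T ^ 2 / 2 := by positivity
  have i1 := (integrable_rpow_mul_exp_neg_mul_sq hT2 (s := q) (by linarith)).integrableOn
    (s := Set.Ioi (1 : ℝ))
  have i2 := (integrable_exp_neg_mul_sq hT2).integrableOn (s := Set.Ioi (1 : ℝ))
  have i3 := (integrable_rpow_mul_exp_neg_mul_sq (b := 1 / 2) (by norm_num) (s := q)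
    (by linarith)).integrableOn (s := Set.Ioi (1 : ℝ))
  have i4 := (integrable_exp_neg_mul_sq (b := 1 / 2) (by norm_num)).integrableOn
    (s := Set.Ioi (1 : ℝ))
  simp only [hexp]
  set K := Real.exp (-((T ^ 2 - 1) / 2) * r₀ ^ 2)
  have key : ∫ r in Set.Ioi (1 : ℝ), (r ^ q * Real.exp (-(T ^ 2 / 2) * r ^ 2)
      - m * Real.exp (-(T ^ 2 / 2) * r ^ 2)) ≤
      ∫ r in Set.Ioi (1 : ℝ), K * (r ^ q * Real.exp (-(1 / 2) * r ^ 2)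
        - m * Real.exp (-(1 / 2) * r ^ 2)) := by
    refine setIntegral_mono_on (i1.sub (i2.const_mul m)) ((i3.sub (i4.const_mul m)).const_mul K)
      measurableSet_Ioi fun r hr => ?_
    have hr0 : 0 < r := lt_trans one_pos hr
    have e1 : Real.exp (-(T ^ 2 / 2) * r ^ 2)
        = Real.exp (-((T ^ 2 - 1) / 2) * r ^ 2) * Real.exp (-(1 / 2) * r ^ 2) := by
      rw [← Real.exp_add]; congr 1; ring
    have hTT : 0 ≤ (T ^ 2 - 1) / 2 := by nlinarith
    have e2 : (r ^ q - m) * Real.exp (-((T ^ 2 - 1) / 2) * r ^ 2) ≤ (r ^ q - m) * K := by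
      rcases le_total r₀ r with h | h
      · refine mul_le_mul_of_nonneg_left ?_ ?_
        · refine Real.exp_le_exp.2 ?_
          have : r₀ ^ 2 ≤ r ^ 2 := by gcongr
          nlinarith
        · have : r₀ ^ q ≤ r ^ q := Real.rpow_le_rpow hr₀0 h hq0.le
          linarith
      · refine mul_le_mul_of_nonpos_left ?_ ?_
        · refine Real.exp_le_exp.2 ?_
          have : r ^ 2 ≤ r₀ ^ 2 := by gcongr
          nlinarith
        · have : r ^ q ≤ r₀ ^ q := Real.rpow_le_rpow hr0.le h hq0.le
          linarith
    have e3 := mul_le_mul_of_nonneg_right e2 (Real.exp_pos (-(1 / 2) * r ^ 2)).le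
    simp only [e1]
    linarith
  rw [integral_const_mul, integral_sub i3 (i4.const_mul m), integral_sub i1 (i2.const_mul m),
    integral_const_mul, integral_const_mul] at key
  have hz : (∫ x in Set.Ioi (1 : ℝ), x ^ q * Real.exp (-(1 / 2) * x ^ 2))
      - m * ∫ x in Set.Ioi (1 : ℝ), Real.exp (-(1 / 2) * x ^ 2) = 0 := by
    rw [hm, truncMoment, div_mul_cancel₀ _ (integral_exp_Ioi_pos 1).ne', sub_self]
  rw [hz, mul_zero] at key
  linarith

lemma trunc_le {q T : ℝ} (hq : 1 ≤ q) (hT : 1 ≤ T) :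
    ∫ x in Set.Ioi T, x ^ q * Real.exp (-(1 / 2) * x ^ 2) ≤
      truncMoment q * T ^ q * ∫ x in Set.Ioi T, Real.exp (-(1 / 2) * x ^ 2) := by
  have hT0 : 0 < T := by linarith
  have h1 := integral_comp_mul_left_Ioi' (fun x : ℝ => x ^ q * Real.exp (-(1 / 2) * x ^ 2)) 1 hT0
  have h2 := integral_comp_mul_left_Ioi' (fun x : ℝ => Real.exp (-(1 / 2) * x ^ 2)) 1 hT0
  rw [mul_one] at h1 h2
  rw [← h1, ← h2]
  have h3 : ∫ x in Set.Ioi (1 : ℝ), (T * x) ^ q * Real.exp (-(1 / 2) * (T * x) ^ 2) =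
      T ^ q * ∫ x in Set.Ioi (1 : ℝ), x ^ q * Real.exp (-(1 / 2) * (T * x) ^ 2) := by
    rw [← integral_const_mul]
    refine setIntegral_congr_fun measurableSet_Ioi fun x hx => ?_
    have : (0 : ℝ) < x := lt_trans one_pos hx
    simp only [Real.mul_rpow hT0.le this.le]
    ring
  simp only [smul_eq_mul]
  rw [h3]
  have h4 := mul_le_mul_of_nonneg_left (scaled_trunc_le hq hT)
    (show 0 ≤ T * T ^ q by positivity)
  linarith

/-! ### Scaling, symmetry and tails of Gaussian laws -/

lemma gauss_eq_gaussianReal (m σ : ℝ) :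
    gauss m σ = gaussianReal m (NNReal.mk (σ ^ 2) (sq_nonneg σ)) := rfl

lemma measurable_abs_sub_rpow (b q : ℝ) : Measurable fun x : ℝ => |x - b| ^ q :=
  (by fun_prop : Measurable fun x : ℝ => |x - b|).pow_const q

lemma measurable_abs_rpow (q : ℝ) : Measurable fun x : ℝ => |x| ^ q :=
  (by fun_prop : Measurable fun x : ℝ => |x|).pow_const q

lemma gauss_zero_eq_map (σ : ℝ) : gauss 0 σ = stdG.map (σ * ·) := by
  rw [gauss_eq_gaussianReal, stdG, gaussianReal_map_const_mul, mul_zero, mul_one]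

lemma gauss_eq_map (b σ : ℝ) : gauss b σ = (gauss 0 σ).map (· + b) := by
  rw [gauss_eq_gaussianReal, gauss_eq_gaussianReal, gaussianReal_map_add_const, zero_add]

instance (b σ : ℝ) : IsProbabilityMeasure (gauss b σ) := by
  rw [gauss_eq_gaussianReal]; infer_instance

instance : IsProbabilityMeasure stdG := by unfold stdG; infer_instance

lemma gauss_zero_neg (σ : ℝ) : (gauss 0 σ).map (fun x => -x) = gauss 0 σ := by
  rw [gauss_eq_gaussianReal, gaussianReal_map_neg, neg_zero]

lemma PgtS_eq (σ t : ℝ) : PgtS σ t = (gauss 0 σ).real (Set.Ioi t) := by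
  rw [PgtS, gauss_zero_eq_map, map_measureReal_apply (by fun_prop) measurableSet_Ioi]; rfl

lemma PgtS_nonneg (σ t : ℝ) : 0 ≤ PgtS σ t := ENNReal.toReal_nonneg

lemma PgtS_eq_integral {σ : ℝ} (hσ : 0 < σ) (t : ℝ) :
    PgtS σ t = (√(2 * Real.pi))⁻¹ *
      ∫ x in Set.Ioi (t / σ), Real.exp (-(1 / 2) * x ^ 2) := by
  have hs : {x : ℝ | t < σ * x} = Set.Ioi (t / σ) := by
    ext x; simp [div_lt_iff₀' hσ]
  rw [PgtS, hs, stdG, gaussianReal_apply_eq_integral _ one_ne_zero, ENNReal.toReal_ofReal]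
  · rw [← integral_const_mul]
    refine integral_congr_ae (ae_of_all _ fun x => ?_)
    simp only [gaussianPDFReal, NNReal.coe_one, mul_one, sub_zero]
    congr 2; ring
  · exact integral_nonneg fun x => gaussianPDFReal_nonneg _ _ _

/-- Chernoff's bound. -/
lemma PgtS_le_exp {σ u : ℝ} (hσ : 0 < σ) (hu : 0 ≤ u) :
    PgtS σ (σ * u) ≤ Real.exp (-(u ^ 2 / 2)) := by
  have h1 : PgtS σ (σ * u) ≤ stdG.real {x | u ≤ id x} := by
    refine measureReal_mono (fun x hx => ?_)
    exact (lt_of_mul_lt_mul_left hx hσ.le).le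
  refine h1.trans ((measure_ge_le_exp_mul_mgf u hu ?_).trans ?_)
  · exact integrable_exp_mul_gaussianReal u
  · rw [stdG, mgf_id_gaussianReal]
    simp only [zero_mul, zero_add, NNReal.coe_one, one_mul]
    rw [← Real.exp_add]
    refine Real.exp_le_exp.2 (by nlinarith)

lemma integrable_abs_rpow {q : ℝ} (hq : 1 ≤ q) (σ : ℝ) :
    Integrable (fun x => |x| ^ q) (gauss 0 σ) := by
  have hq0 : 0 < q := by linarith
  have h := (memLp_id_gaussianReal (μ := 0) (v := NNReal.mk (σ ^ 2) (sq_nonneg σ))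
    q.toNNReal).integrable_norm_rpow (by simpa using hq0) (by simp)
  simpa [gauss_eq_gaussianReal, Real.coe_toNNReal q hq0.le] using h

lemma integrable_abs_sub_rpow {q : ℝ} (hq : 1 ≤ q) (b σ : ℝ) :
    Integrable (fun x => |x - b| ^ q) (gauss b σ) := by
  rw [gauss_eq_map, integrable_map_measure
    (measurable_abs_sub_rpow b q).aestronglyMeasurable (by fun_prop)]
  simpa [Function.comp_def] using integrable_abs_rpow hq σ

lemma integral_abs_sub_rpow (q b σ : ℝ) :
    ∫ x, |x - b| ^ q ∂(gauss b σ) = sigmaqq σ q := by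
  rw [gauss_eq_map, integral_map (by fun_prop)
    (measurable_abs_sub_rpow b q).aestronglyMeasurable]
  simp [sigmaqq]

lemma sigmaqq_nonneg (σ q : ℝ) : 0 ≤ sigmaqq σ q :=
  integral_nonneg fun x => by positivity

lemma sigmaqq_scale {σ : ℝ} (hσ : 0 < σ) (q : ℝ) : sigmaqq σ q = σ ^ q * sigmaqq 1 q := by
  rw [sigmaqq, sigmaqq, gauss_zero_eq_map, gauss_zero_eq_map,
    integral_map (by fun_prop) (measurable_abs_rpow q).aestronglyMeasurable,
    integral_map (by fun_prop) (measurable_abs_rpow q).aestronglyMeasurable,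
    ← integral_const_mul]
  refine integral_congr_ae (ae_of_all _ fun x => ?_)
  simp only [one_mul, abs_mul, abs_of_pos hσ]
  rw [Real.mul_rpow hσ.le (abs_nonneg x)]

/-- A signal of size at least `a` falls below the threshold `τ` only if the noise exceeds
`a - τ` in the direction opposite to the signal. -/
lemma gauss_abs_lt_le {σ a b τ : ℝ} (hab : a ≤ |b|) :
    (gauss b σ).real {y | |y| < τ} ≤ PgtS σ (a - τ) := by
  rw [PgtS_eq, gauss_eq_map, map_measureReal_apply (by fun_prop)
    (measurableSet_lt (by fun_prop) (by fun_prop))]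
  rcases le_total 0 b with hb | hb
  · rw [abs_of_nonneg hb] at hab
    conv_rhs => rw [← gauss_zero_neg, map_measureReal_apply (by fun_prop) measurableSet_Ioi]
    refine measureReal_mono fun x hx => ?_
    simp only [Set.mem_preimage, Set.mem_ofPred_eq, abs_lt, Set.mem_Ioi] at hx ⊢
    linarith
  · rw [abs_of_nonpos hb] at hab
    refine measureReal_mono fun x hx => ?_
    simp only [Set.mem_preimage, Set.mem_ofPred_eq, abs_lt, Set.mem_Ioi] at hx ⊢
    linarith

/-! ### Risk of a single coordinate -/

/-- Above the threshold the error of hard thresholding is the noise; below it the error is `|b|`,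
which is at most the noise plus `M`. -/
lemma risk_signal {q σ b τ M : ℝ} (hq : 1 ≤ q) (hM : 0 ≤ M) (hτ : τ ≤ M) :
    ∫⁻ y, ENNReal.ofReal (|(if τ ≤ |y| then y else 0) - b| ^ q) ∂(gauss b σ) ≤
      ENNReal.ofReal (2 ^ q * (sigmaqq σ q + M ^ q * (gauss b σ).real {y | |y| < τ})) := by
  have hms : MeasurableSet {y : ℝ | |y| < τ} := measurableSet_lt (by fun_prop) (by fun_prop)
  set g : ℝ → ℝ := fun y => 2 ^ q * (|y - b| ^ q + {y | |y| < τ}.indicator (fun _ => M ^ q) y)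
    with hg
  have hgi : Integrable g (gauss b σ) :=
    ((integrable_abs_sub_rpow hq b σ).add ((integrable_const _).indicator hms)).const_mul _
  have hint : ∫ y, g y ∂(gauss b σ) =
      2 ^ q * (sigmaqq σ q + M ^ q * (gauss b σ).real {y | |y| < τ}) := by
    rw [hg, integral_const_mul, integral_add (integrable_abs_sub_rpow hq b σ)
      ((integrable_const _).indicator hms), integral_abs_sub_rpow, integral_indicator hms,
      setIntegral_const, smul_eq_mul, mul_comm (M ^ q)]
  have hg0 : ∀ y, 0 ≤ g y := fun y =>
    mul_nonneg (by positivity) (add_nonneg (by positivity)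
      (Set.indicator_nonneg (fun _ _ => by positivity) y))
  rw [← hint, ofReal_integral_eq_lintegral_ofReal hgi (ae_of_all _ hg0)]
  refine lintegral_mono fun y => ENNReal.ofReal_le_ofReal ?_
  have h2 : (1 : ℝ) ≤ 2 ^ q := Real.one_le_rpow (by norm_num) (by linarith)
  by_cases h : τ ≤ |y|
  · have : y ∉ {y : ℝ | |y| < τ} := by simpa using h
    simp only [hg, h, if_true, Set.indicator_of_notMem this, add_zero]
    exact le_mul_of_one_le_left (by positivity) h2
  · have hy : y ∈ {y : ℝ | |y| < τ} := by simpa using h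
    simp only [hg, h, if_false, Set.indicator_of_mem hy, zero_sub, abs_neg]
    have hy' : |y| < τ := hy
    have hb : |b| ≤ 2 * max |y - b| M := by
      have h3 : |b| ≤ |y - b| + |y| := by
        have := abs_sub_abs_le_abs_sub b y
        rw [abs_sub_comm] at this; linarith
      have := le_max_left |y - b| M
      have := le_max_right |y - b| M
      linarith
    calc |b| ^ q ≤ (2 * max |y - b| M) ^ q := by gcongr
      _ = 2 ^ q * (max |y - b| M) ^ q := Real.mul_rpow (by norm_num) (by positivity)
      _ ≤ _ := by
        gcongr
        rcases max_cases |y - b| M with ⟨h, _⟩ | ⟨h, _⟩ <;> rw [h]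
        · have : 0 ≤ M ^ q := by positivity
          linarith
        · have : 0 ≤ |y - b| ^ q := by positivity
          linarith

lemma risk_null {q σ τ : ℝ} (hq : 1 ≤ q) (hσ : 0 < σ) (hτ : σ ≤ τ) :
    ∫⁻ y, ENNReal.ofReal (|(if τ ≤ |y| then y else 0) - 0| ^ q) ∂(gauss 0 σ) ≤
      ENNReal.ofReal (2 * truncMoment q * τ ^ q * PgtS σ τ) := by
  have hq0 : q ≠ 0 := by linarith
  have hmeas : Measurable fun y : ℝ => |(if τ ≤ |y| then y else 0) - 0| ^ q := by
    have : Measurable fun y : ℝ => if τ ≤ |y| then y else 0 :=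
      Measurable.ite (measurableSet_le (by fun_prop) (by fun_prop)) measurable_id measurable_const
    fun_prop
  have hi : Integrable (fun y : ℝ => |(if τ ≤ |y| then y else 0) - 0| ^ q) (gauss 0 σ) := by
    refine (integrable_abs_rpow hq σ).mono' hmeas.aestronglyMeasurable (ae_of_all _ fun y => ?_)
    rw [Real.norm_of_nonneg (by positivity)]
    split_ifs
    · simp
    · simp only [sub_zero, abs_zero, Real.zero_rpow hq0]; positivity
  rw [← ofReal_integral_eq_lintegral_ofReal hi (ae_of_all _ fun y => by positivity)]
  refine ENNReal.ofReal_le_ofReal ?_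
  rw [gauss_zero_eq_map, integral_map (by fun_prop) hmeas.aestronglyMeasurable, stdG,
    integral_gaussianReal_eq_integral_smul one_ne_zero]
  set T := τ / σ with hT
  have hT1 : 1 ≤ T := (one_le_div hσ).2 hτ
  have hTσ : τ = σ * T := by rw [hT]; field_simp
  set c := (√(2 * Real.pi))⁻¹
  -- the integrand is an even function, supported on `T ≤ |x|`
  have hev : ∀ x : ℝ, gaussianPDFReal 0 1 x • |(if τ ≤ |σ * x| then σ * x else 0) - 0| ^ q =
      (fun x => (Set.Ici T).indicator
        (fun x => c * σ ^ q * (x ^ q * Real.exp (-(1 / 2) * x ^ 2))) x) |x| := by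
    intro x
    have hiff : τ ≤ |σ * x| ↔ |x| ∈ Set.Ici T := by
      rw [abs_mul, abs_of_pos hσ, hTσ, Set.mem_Ici, mul_le_mul_iff_right₀ hσ]
    have hpdf : gaussianPDFReal 0 1 x = c * Real.exp (-(1 / 2) * |x| ^ 2) := by
      simp only [gaussianPDFReal, NNReal.coe_one, mul_one, sub_zero, sq_abs]
      congr 2; ring
    by_cases h : |x| ∈ Set.Ici T
    · rw [if_pos (hiff.2 h), hpdf]
      simp only [Set.indicator_of_mem h, sub_zero, abs_mul, abs_of_pos hσ, smul_eq_mul]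
      rw [Real.mul_rpow hσ.le (abs_nonneg x)]
      ring
    · rw [if_neg (fun h' => h (hiff.1 h'))]
      simp only [Set.indicator_of_notMem h, sub_zero, abs_zero, Real.zero_rpow hq0, smul_zero]
  simp only [hev]
  rw [integral_comp_abs (f := fun x => (Set.Ici T).indicator
        (fun x => c * σ ^ q * (x ^ q * Real.exp (-(1 / 2) * x ^ 2))) x),
    setIntegral_indicator measurableSet_Ici]
  have hset : Set.Ioi (0 : ℝ) ∩ Set.Ici T = Set.Ici T :=
    Set.inter_eq_right.2 fun x hx => lt_of_lt_of_le (one_pos.trans_le hT1) hx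
  rw [hset, integral_Ici_eq_integral_Ioi, integral_const_mul, PgtS_eq_integral hσ, ← hT]
  have hc : 0 ≤ 2 * (c * σ ^ q) := by positivity
  have h := mul_le_mul_of_nonneg_left (trunc_le hq hT1) hc
  have hpow : τ ^ q = σ ^ q * T ^ q := by rw [hTσ, Real.mul_rpow hσ.le (by linarith)]
  rw [hpow]
  linarith

/-! ### Summing over coordinates -/

/-- The risk is the sum of the coordinate risks. At most `s` of them are signals (bounded by `B`)
and at most `p` are null (bounded by `A`). -/
lemma seqRisk_le {p s : ℕ} {σ q a τ A B : ℝ} (hA : 0 ≤ A) (hB : 0 ≤ B) {β : Fin p → ℝ}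
    (hβ : β ∈ sparseSet p s a)
    (h0 : ∫⁻ y, ENNReal.ofReal (|(if τ ≤ |y| then y else 0) - 0| ^ q) ∂(gauss 0 σ)
      ≤ ENNReal.ofReal A)
    (h1 : ∀ b : ℝ, a ≤ |b| →
      ∫⁻ y, ENNReal.ofReal (|(if τ ≤ |y| then y else 0) - b| ^ q) ∂(gauss b σ)
        ≤ ENNReal.ofReal B) :
    seqRisk p σ q (hardThr p τ) β ≤ ENNReal.ofReal (p * A + s * B) := by
  have hmeas : ∀ b : ℝ, Measurable fun y : ℝ =>
      ENNReal.ofReal (|(if τ ≤ |y| then y else 0) - b| ^ q) := by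
    intro b
    have : Measurable fun y : ℝ => if τ ≤ |y| then y else 0 :=
      Measurable.ite (measurableSet_le (by fun_prop) (by fun_prop)) measurable_id measurable_const
    fun_prop
  have hcoord : ∀ j, ∫⁻ y, ENNReal.ofReal (|hardThr p τ y j - β j| ^ q) ∂(seqModel p σ β) =
      ∫⁻ y, ENNReal.ofReal (|(if τ ≤ |y| then y else 0) - β j| ^ q) ∂(gauss (β j) σ) := by
    intro j
    have hmp : MeasurePreserving (Function.eval j) (seqModel p σ β) (gauss (β j) σ) :=
      measurePreserving_eval (fun j => gauss (β j) σ) j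
    exact hmp.lintegral_comp (hmeas (β j))
  have hbound : ∀ j, ∫⁻ y, ENNReal.ofReal (|hardThr p τ y j - β j| ^ q) ∂(seqModel p σ β) ≤
      ENNReal.ofReal (A + if β j ≠ 0 then B else 0) := by
    intro j
    rw [hcoord]
    by_cases hj : β j = 0
    · simpa [hj] using h0
    · rw [if_pos hj]
      exact (h1 _ (hβ.2 j hj)).trans (ENNReal.ofReal_le_ofReal (by linarith))
  unfold seqRisk
  calc ∫⁻ y, ENNReal.ofReal (∑ j, |hardThr p τ y j - β j| ^ q) ∂(seqModel p σ β)
      = ∑ j, ∫⁻ y, ENNReal.ofReal (|hardThr p τ y j - β j| ^ q) ∂(seqModel p σ β) := by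
        rw [← lintegral_finsetSum]
        · refine lintegral_congr fun y => ?_
          exact ENNReal.ofReal_sum_of_nonneg fun j _ => by positivity
        · intro j _
          exact (hmeas (β j)).comp (measurable_pi_apply j)
    _ ≤ ∑ j, ENNReal.ofReal (A + if β j ≠ 0 then B else 0) := Finset.sum_le_sum fun j _ => hbound j
    _ = ENNReal.ofReal (∑ j, (A + if β j ≠ 0 then B else 0)) :=
        (ENNReal.ofReal_sum_of_nonneg fun j _ => by split_ifs <;> linarith).symm
    _ ≤ ENNReal.ofReal (p * A + s * B) := by
        refine ENNReal.ofReal_le_ofReal ?_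
        rw [Finset.sum_add_distrib, ← Finset.sum_filter, Finset.sum_const, Finset.sum_const]
        simp only [Finset.card_univ, Fintype.card_fin, nsmul_eq_mul]
        have : ((Finset.univ.filter fun i => β i ≠ 0).card : ℝ) ≤ s := by exact_mod_cast hβ.1
        gcongr

lemma tStar_le_tFun {p s : ℕ} {σ M : ℝ} (hL : 0 ≤ Real.log ((p : ℝ) / s - 1)) (hM : 0 < M) :
    tStar p s σ ≤ tFun p s σ M := by
  have hsq : (tStar p s σ) ^ 2 = 2 * σ ^ 2 * Real.log ((p : ℝ) / s - 1) := by
    rw [tStar, mul_pow, Real.sq_sqrt (by positivity)]; ring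
  rw [tFun, div_add_div _ _ two_ne_zero hM.ne', le_div_iff₀ (by positivity)]
  nlinarith [sq_nonneg (M - tStar p s σ)]

lemma tFun_le {p s : ℕ} {σ M : ℝ} (hσ : 0 < σ) (hL : 0 ≤ Real.log ((p : ℝ) / s - 1)) (hM : 0 < M)
    (h : tStar p s σ ≤ M) : tFun p s σ M ≤ M := by
  have h0 : 0 ≤ tStar p s σ := by unfold tStar; positivity
  have hsq : (tStar p s σ) ^ 2 = 2 * σ ^ 2 * Real.log ((p : ℝ) / s - 1) := by
    rw [tStar, mul_pow, Real.sq_sqrt (by positivity)]; ring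
  rw [tFun, div_add_div _ _ two_ne_zero hM.ne', div_le_iff₀ (by positivity)]
  nlinarith [mul_self_le_mul_self h0 h]

/-- Theorem (upper bound for the hard-thresholding estimator `β̂^a`). -/
theorem stmt_5 (q : ℝ) (hq : 1 ≤ q) :
    ∃ C : ℝ, 0 < C ∧ ∀ (σ a : ℝ) (s p : ℕ), 0 < σ → 0 < a → 1 ≤ s →
      (s : ℝ) ≤ (p : ℝ) / 4 →
      maxRisk p s σ q a (hardThr p (tFun p s σ (max a (tStar p s σ))))
        ≤ ENNReal.ofReal (C * PhiPlus p s σ q a) := by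
  have hm0 := truncMoment_nonneg q
  have hs1 := sigmaqq_nonneg 1 q
  refine ⟨16 * truncMoment q + 2 ^ (q + 1) * (sigmaqq 1 q + 1), by positivity, ?_⟩
  intro σ a s p hσ ha hs hsp
  have hs' : (1 : ℝ) ≤ s := by exact_mod_cast hs
  have hs0 : (0 : ℝ) < s := by linarith
  set L := Real.log ((p : ℝ) / s - 1) with hLdef
  have hps : 3 ≤ (p : ℝ) / s - 1 := by
    have : 4 ≤ (p : ℝ) / s := by rw [le_div_iff₀ hs0]; linarith
    linarith
  have hL : 1 ≤ L := by
    rw [hLdef, Real.le_log_iff_exp_le (by linarith)]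
    have := Real.exp_one_lt_d9
    linarith
  have hL0 : 0 ≤ L := by linarith
  have hσt : σ ≤ tStar p s σ := by
    unfold tStar
    exact le_mul_of_one_le_right hσ.le (Real.one_le_sqrt.2 (by linarith))
  set t := tStar p s σ with ht
  have ht0 : 0 < t := by linarith
  set M := max a t with hM
  have hM0 : 0 < M := lt_max_of_lt_left ha
  set τ := tFun p s σ M with hτ
  have htτ : t ≤ τ := tStar_le_tFun hL0 hM0
  have hτM : τ ≤ M := tFun_le hσ hL0 hM0 (le_max_right _ _)
  have hτ0 : 0 < τ := by linarith
  have hnull := risk_null hq hσ (hσt.trans htτ)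
  have hP := PgtS_nonneg σ τ
  have hA : 0 ≤ 2 * truncMoment q * τ ^ q * PgtS σ τ := by positivity
  have hpp : (p : ℝ) ≤ 2 * (p - s) := by linarith
  have h2q : (2 : ℝ) ^ (q + 1) = 2 * 2 ^ q := by
    rw [Real.rpow_add (by norm_num), Real.rpow_one, mul_comm]
  have h2q0 : (0 : ℝ) < 2 ^ q := by positivity
  have hps0 : (0 : ℝ) ≤ p - s := by linarith
  refine iSup₂_le fun β hβ => ?_
  unfold PhiPlus
  by_cases hta : t ≤ a
  · -- strong signals: `M = a`
    rw [if_pos hta]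
    have hMa : M = a := max_eq_left hta
    have hP2 := PgtS_nonneg σ (max (a - τ) 0)
    have hσq := sigmaqq_nonneg σ q
    refine (seqRisk_le (B := 2 ^ q * (sigmaqq σ q + a ^ q * PgtS σ (max (a - τ) 0))) hA
      (by positivity) hβ hnull fun b hb => ?_).trans (ENNReal.ofReal_le_ofReal ?_)
    · refine (risk_signal (M := a) hq ha.le (hMa ▸ hτM)).trans (ENNReal.ofReal_le_ofReal ?_)
      have := gauss_abs_lt_le (σ := σ) (τ := τ) hb
      rw [max_eq_left (by linarith [hMa ▸ hτM])]
      gcongr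
    · set D := max (a ^ q * psiPlus p s σ a) (sigmaqq σ q * s)
      have hD1 : a ^ q * psiPlus p s σ a ≤ D := le_max_left _ _
      have hD2 : sigmaqq σ q * s ≤ D := le_max_right _ _
      rw [psiPlus, ← hMa, ← hτ, hMa] at hD1
      have hD0 : 0 ≤ D := (by positivity : 0 ≤ sigmaqq σ q * s).trans hD2
      have hτa : τ ^ q ≤ a ^ q := by
        have : τ ≤ a := hMa ▸ hτM
        gcongr
      have x1 : 0 ≤ a ^ q * ((p - s) * PgtS σ τ) := by positivity
      have x2 : 0 ≤ a ^ q * (s * PgtS σ (max (a - τ) 0)) := by positivity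
      have y1 : p * (τ ^ q * PgtS σ τ) ≤ 2 * D := by
        calc p * (τ ^ q * PgtS σ τ) ≤ (2 * (p - s)) * (a ^ q * PgtS σ τ) := by gcongr
          _ ≤ 2 * D := by linarith
      have y2 : s * (sigmaqq σ q + a ^ q * PgtS σ (max (a - τ) 0)) ≤ 2 * D := by linarith
      have z1 := mul_le_mul_of_nonneg_left y1 (by positivity : 0 ≤ 2 * truncMoment q)
      have z2 := mul_le_mul_of_nonneg_left y2 h2q0.le
      have z3 : 0 ≤ 2 * 2 ^ q * sigmaqq 1 q * D := by positivity
      have z4 : 0 ≤ truncMoment q * D := by positivity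
      rw [h2q]
      linarith
  · -- weak signals: `M = τ = t*`
    rw [if_neg hta]
    have hMt : M = t := max_eq_right (not_le.1 hta).le
    have hτt : τ = t := le_antisymm (hMt ▸ hτM) htτ
    have htq : t ^ q = σ ^ q * (2 * L) ^ (q / 2) := by
      rw [ht, tStar, Real.mul_rpow hσ.le (Real.sqrt_nonneg _), Real.sqrt_eq_rpow,
        ← Real.rpow_mul (by positivity)]
      congr 2; ring
    rw [mul_assoc (s : ℝ), ← htq]
    refine (seqRisk_le (B := 2 ^ q * (sigmaqq σ q + t ^ q)) hA
      (by have := sigmaqq_nonneg σ q; positivity) hβ hnull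
      fun b hb => ?_).trans (ENNReal.ofReal_le_ofReal ?_)
    · refine (risk_signal (M := t) hq ht0.le hτt.le).trans (ENNReal.ofReal_le_ofReal ?_)
      have : (gauss b σ).real {y | |y| < τ} ≤ 1 := measureReal_le_one
      gcongr
      exact mul_le_of_le_one_right (by positivity) this
    · -- the Gaussian tail at `t*` is at most `exp (-L) = s / (p - s)`
      have htail : PgtS σ τ ≤ s / (p - s) := by
        have h := PgtS_le_exp (u := √(2 * L)) hσ (Real.sqrt_nonneg _)
        rw [Real.sq_sqrt (by positivity), mul_div_cancel_left₀ _ two_ne_zero, Real.exp_neg,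
          hLdef, Real.exp_log (by linarith), ← hLdef] at h
        have e : ((p : ℝ) / s - 1)⁻¹ = s / (p - s) := by
          rw [div_sub_one hs0.ne', inv_div]
        rw [hτt, ← e]
        exact h
      have hpos : (0 : ℝ) < p - s := by linarith
      have y0 : p * PgtS σ τ ≤ 2 * s := by
        calc p * PgtS σ τ ≤ (2 * (p - s)) * (s / (p - s)) := by gcongr
          _ = 2 * s := by field_simp
      have y1 : sigmaqq σ q ≤ t ^ q * sigmaqq 1 q := by
        rw [sigmaqq_scale hσ]; gcongr
      rw [hτt] at y0 ⊢
      have z1 := mul_le_mul_of_nonneg_left y0 (by positivity : 0 ≤ 2 * truncMoment q * t ^ q)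
      have z2 := mul_le_mul_of_nonneg_left y1 (by positivity : 0 ≤ 2 ^ q * (s : ℝ))
      have z3 : 0 ≤ 2 ^ q * s * t ^ q * sigmaqq 1 q := by positivity
      have z4 : 0 ≤ truncMoment q * (s * t ^ q) := by positivity
      have z5 : 0 ≤ 2 ^ q * (s * t ^ q) := by positivity
      rw [h2q]
      linarith

end
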